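/- Fix an integer P ≥ 2 and let β ∈ (0, 1/2). There exists a constant C = C(β,P) such that for every real α with |α| ≥ 1, every δ ∈ (0,1], every continuous f : [0,∞) → ℂ with ‖f‖_{β,δ,1} < ∞, and φ(z) = −(1/(2|α|)) ∫₀^∞ ( e^{−|α||x−z|} − e^{−|α|(x+z)} ) f(x) dx the decaying solution of φ'' − α²φ = f with φ(0) = 0, the following product estimates hold for all functions g, h : [0,∞) → ℂ: ‖φ' · g‖_{β,δ,1} ≤ C ‖f‖_{β,δ,1} ‖g‖_{β,δ,1} and ‖φ · h‖_{β,δ,1} ≤ C ‖f‖_{β,δ,1} ‖h‖_{β,δ,1}. -/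

import Mathlib

open scoped ENNReal

/-- The boundary-layer weight `W_{p,δ}(z) = 1 + Σ_{q=1}^{p} δ^{−q} (1 + (z/δ)^{P−1+q})^{−1}`. -/
noncomputable def wt (P p : ℕ) (δ z : ℝ) : ℝ :=
  1 + ∑ q ∈ Finset.Icc 1 p, (δ ^ q)⁻¹ * (1 + (z / δ) ^ (P - 1 + q))⁻¹

/-- The boundary-layer norm `‖ω‖_{β,δ,p} = sup_{z≥0} W_{p,δ}(z)^{−1} e^{βz}|ω(z)|`. -/
noncomputable def blNorm (P : ℕ) (β δ : ℝ) (p : ℕ) (ω : ℝ → ℂ) : ℝ≥0∞ :=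
  ⨆ z : Set.Ici (0:ℝ), ENNReal.ofReal ((wt P p δ z.1)⁻¹ * Real.exp (β * z.1) * ‖ω z.1‖)

/-- The Green's function solution
`φ(z) = −(1/(2α)) ∫₀^∞ ( e^{−α|x−z|} − e^{−α(x+z)} ) f(x) dx` of `φ'' − α²φ = f`, `φ(0)=0`. -/
noncomputable def greenSol (α : ℝ) (f : ℝ → ℂ) (z : ℝ) : ℂ :=
  -(1 / (2 * (α:ℂ))) * ∫ x in Set.Ici (0:ℝ),
    ((Real.exp (-(α * |x - z|)) - Real.exp (-(α * (x + z))) : ℝ) : ℂ) * f x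

/-!
Multiplication by a function bounded by `M` on the half line costs a factor `M` in every
boundary-layer norm, so it suffices to bound `φ` and `φ'` uniformly by `‖f‖_{β,δ,1}`. The integral
over `[0, ∞)` of `W_{1,δ}(z) e^{-βz}` is bounded independently of `δ`, because the layer term
`δ⁻¹ (1 + (z/δ)^P)⁻¹` is an `L¹`-invariant rescaling of `(1 + u^P)⁻¹`, which is integrable for
`P ≥ 2`; hence `‖f‖_{L¹} ≲ ‖f‖_{β,δ,1}`. The kernel `e^{-a|x-z|} - e^{-a(x+z)}` is at most `1` in
absolute value and `2a`-Lipschitz in `z`, so after division by `2a` the function `φ` is at most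
`‖f‖_{L¹} / (2a)`, and it is `‖f‖_{L¹}`-Lipschitz, which bounds `φ'`.
-/

open MeasureTheory Set Filter Topology

theorem norm_derivWithin_le_of_lip {𝕜 F : Type*} [NontriviallyNormedField 𝕜]
    [NormedAddCommGroup F] [NormedSpace 𝕜 F] {f : 𝕜 → F} {s : Set 𝕜} {x₀ : 𝕜} {C : ℝ}
    (hC₀ : 0 ≤ C) (hlip : ∀ᶠ x in 𝓝[s] x₀, ‖f x - f x₀‖ ≤ C * ‖x - x₀‖) :
    ‖derivWithin f s x₀‖ ≤ C := by
  by_cases hf : DifferentiableWithinAt 𝕜 f s x₀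
  swap
  · simpa only [derivWithin_zero_of_not_differentiableWithinAt hf, norm_zero] using hC₀
  by_cases hacc : AccPt x₀ (𝓟 s)
  swap
  · simpa only [derivWithin_zero_of_not_accPt hacc, norm_zero] using hC₀
  have : (𝓝[s \ {x₀}] x₀).NeBot := accPt_principal_iff_nhdsWithin.1 hacc
  have hslope := hasDerivWithinAt_iff_tendsto_slope.1 hf.hasDerivWithinAt
  refine le_of_tendsto hslope.norm ?_
  filter_upwards [nhdsWithin_mono x₀ sdiff_subset hlip, self_mem_nhdsWithin] with x hx hxs
  have hpos : 0 < ‖x - x₀‖ := norm_pos_iff.2 (sub_ne_zero.2 hxs.2)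
  rw [slope_def_module, norm_smul, norm_inv]
  exact (inv_mul_le_iff₀' hpos).2 hx

theorem lipschitzOnWith_exp_neg : LipschitzOnWith 1 (fun t : ℝ ↦ Real.exp (-t)) (Ici 0) := by
  refine (convex_Ici 0).lipschitzOnWith_of_nnnorm_deriv_le (fun t _ ↦ by fun_prop) fun t ht ↦ ?_
  have hderiv : deriv (fun t : ℝ ↦ Real.exp (-t)) t = -Real.exp (-t) := by
    simpa using (hasDerivAt_neg t).exp.deriv
  rw [hderiv, nnnorm_neg, ← NNReal.coe_le_coe, coe_nnnorm, Real.norm_eq_abs, Real.abs_exp]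
  exact Real.exp_le_one_iff.2 (neg_nonpos.2 ht)

theorem inv_one_add_pow_le {m n : ℕ} (hmn : m ≤ n) {u : ℝ} (hu : 0 ≤ u) :
    (1 + u ^ n)⁻¹ ≤ 2 * (1 + u ^ m)⁻¹ := by
  rw [← div_eq_mul_inv, inv_eq_one_div, div_le_div_iff₀ (by positivity) (by positivity)]
  have hn : 0 ≤ u ^ n := by positivity
  rcases le_total u 1 with h | h
  · linarith [pow_le_one₀ (n := m) hu h]
  · linarith [pow_le_pow_right₀ h hmn]

theorem integrableOn_inv_one_add_pow {n : ℕ} (hn : 2 ≤ n) :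
    IntegrableOn (fun u : ℝ ↦ (1 + u ^ n)⁻¹) (Ioi 0) := by
  refine (integrable_inv_one_add_sq.const_mul 2).integrableOn.mono'
    (Measurable.aestronglyMeasurable (by fun_prop)) ?_
  filter_upwards [ae_restrict_mem measurableSet_Ioi] with u (hu : 0 < u)
  rw [Real.norm_of_nonneg (by positivity)]
  exact inv_one_add_pow_le hn hu.le

section BoundaryLayer

variable {P p : ℕ} {β δ z M : ℝ} {f u : ℝ → ℂ}

theorem wt_pos (hδ : 0 < δ) (hz : 0 ≤ z) : 0 < wt P p δ z := by
  unfold wt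
  positivity

theorem le_blNorm (f : ℝ → ℂ) (hz : 0 ≤ z) :
    ENNReal.ofReal ((wt P p δ z)⁻¹ * Real.exp (β * z) * ‖f z‖) ≤ blNorm P β δ p f :=
  le_iSup (fun z : Ici (0 : ℝ) ↦
    ENNReal.ofReal ((wt P p δ z.1)⁻¹ * Real.exp (β * z.1) * ‖f z.1‖)) ⟨z, hz⟩

theorem norm_le_blNorm_mul (hδ : 0 < δ) (hf : blNorm P β δ p f ≠ ⊤) (hz : 0 ≤ z) :
    ‖f z‖ ≤ (blNorm P β δ p f).toReal * (wt P p δ z * Real.exp (-(β * z))) := by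
  have hle := (ENNReal.ofReal_le_iff_le_toReal hf).1 (le_blNorm f hz)
  have hw := wt_pos (P := P) (p := p) hδ hz
  rw [Real.exp_neg, ← div_le_iff₀ (by positivity)]
  refine Eq.trans_le ?_ hle
  field_simp

theorem blNorm_mul_le (hδ : 0 < δ) (hM : 0 ≤ M) (hu : ∀ z, 0 ≤ z → ‖u z‖ ≤ M) (g : ℝ → ℂ) :
    blNorm P β δ p (fun z ↦ u z * g z) ≤ ENNReal.ofReal M * blNorm P β δ p g := by
  refine iSup_le fun ⟨z, (hz : 0 ≤ z)⟩ ↦ ?_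
  have hw := wt_pos (P := P) (p := p) hδ hz
  calc ENNReal.ofReal ((wt P p δ z)⁻¹ * Real.exp (β * z) * ‖u z * g z‖)
      = ENNReal.ofReal (‖u z‖ * ((wt P p δ z)⁻¹ * Real.exp (β * z) * ‖g z‖)) := by
        rw [norm_mul, mul_left_comm]
    _ ≤ ENNReal.ofReal (M * ((wt P p δ z)⁻¹ * Real.exp (β * z) * ‖g z‖)) := by
        gcongr
        exact hu z hz
    _ = ENNReal.ofReal M * ENNReal.ofReal ((wt P p δ z)⁻¹ * Real.exp (β * z) * ‖g z‖) :=
        ENNReal.ofReal_mul hM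
    _ ≤ ENNReal.ofReal M * blNorm P β δ p g := by
        gcongr
        exact le_blNorm g hz

/-- An integrable majorant on the half line of the decay profile `W_{1,δ}(z) e^{-βz}` of functions
of finite norm `‖·‖_{β,δ,1}`: the exponential factor is dropped from the layer term, so that the
latter is an exact rescaling. -/
noncomputable def layerMajorant (P : ℕ) (β δ z : ℝ) : ℝ :=
  Real.exp (-β * z) + δ⁻¹ * (1 + (δ⁻¹ * z) ^ P)⁻¹

theorem wt_one_mul_exp_le_layerMajorant (hP : 1 ≤ P) (hβ : 0 ≤ β) (hδ : 0 < δ) (hz : 0 ≤ z) :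
    wt P 1 δ z * Real.exp (-(β * z)) ≤ layerMajorant P β δ z := by
  have hexp : Real.exp (-(β * z)) ≤ 1 := Real.exp_le_one_iff.2 (neg_nonpos.2 (by positivity))
  have hlayer : 0 ≤ δ⁻¹ * (1 + (δ⁻¹ * z) ^ P)⁻¹ := by positivity
  simp only [wt, layerMajorant, Finset.Icc_self, Finset.sum_singleton, pow_one,
    Nat.sub_add_cancel hP, div_eq_inv_mul, add_mul, one_mul, neg_mul]
  exact add_le_add_right (mul_le_of_le_one_right hlayer hexp) _

theorem norm_le_blNorm_mul_layerMajorant (hP : 1 ≤ P) (hβ : 0 ≤ β) (hδ : 0 < δ)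
    (hf : blNorm P β δ 1 f ≠ ⊤) (hz : 0 ≤ z) :
    ‖f z‖ ≤ (blNorm P β δ 1 f).toReal * layerMajorant P β δ z :=
  (norm_le_blNorm_mul hδ hf hz).trans <|
    mul_le_mul_of_nonneg_left (wt_one_mul_exp_le_layerMajorant hP hβ hδ hz) ENNReal.toReal_nonneg

theorem integrableOn_rescaled_inv_one_add_pow (hP : 2 ≤ P) (hδ : 0 < δ) :
    IntegrableOn (fun z ↦ δ⁻¹ * (1 + (δ⁻¹ * z) ^ P)⁻¹) (Ioi 0) := by
  refine Integrable.const_mul ?_ _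
  refine (integrableOn_Ioi_comp_mul_left_iff (fun u : ℝ ↦ (1 + u ^ P)⁻¹) 0 (inv_pos.2 hδ)).2 ?_
  rw [mul_zero]
  exact integrableOn_inv_one_add_pow hP

theorem integrableOn_layerMajorant (hP : 2 ≤ P) (hβ : 0 < β) (hδ : 0 < δ) :
    IntegrableOn (layerMajorant P β δ) (Ici 0) := by
  rw [integrableOn_Ici_iff_integrableOn_Ioi]
  exact (exp_neg_integrableOn_Ioi 0 hβ).add (integrableOn_rescaled_inv_one_add_pow hP hδ)

theorem integral_layerMajorant (hP : 2 ≤ P) (hβ : 0 < β) (hδ : 0 < δ) :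
    ∫ z in Ici 0, layerMajorant P β δ z = β⁻¹ + ∫ u in Ioi (0 : ℝ), (1 + u ^ P)⁻¹ := by
  have hexp : ∫ z in Ioi 0, Real.exp (-β * z) = β⁻¹ := by
    rw [integral_exp_mul_Ioi (neg_neg_of_pos hβ) 0]
    simp
  have hlayer : ∫ z in Ioi 0, δ⁻¹ * (1 + (δ⁻¹ * z) ^ P)⁻¹ = ∫ u in Ioi (0 : ℝ), (1 + u ^ P)⁻¹ := by
    rw [integral_const_mul,
      integral_comp_mul_left_Ioi (fun u : ℝ ↦ (1 + u ^ P)⁻¹) 0 (inv_pos.2 hδ), mul_zero,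
      smul_eq_mul, mul_inv_cancel_left₀ (inv_ne_zero hδ.ne')]
  rw [integral_Ici_eq_integral_Ioi, ← hexp, ← hlayer]
  exact integral_add (exp_neg_integrableOn_Ioi 0 hβ) (integrableOn_rescaled_inv_one_add_pow hP hδ)

theorem integrableOn_of_blNorm_ne_top (hP : 2 ≤ P) (hβ : 0 < β) (hδ : 0 < δ)
    (hfm : AEStronglyMeasurable f (volume.restrict (Ici 0))) (hf : blNorm P β δ 1 f ≠ ⊤) :
    IntegrableOn f (Ici 0) := by
  refine ((integrableOn_layerMajorant hP hβ hδ).const_mul (blNorm P β δ 1 f).toReal).mono' hfm ?_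
  filter_upwards [ae_restrict_mem measurableSet_Ici] with z hz
  exact norm_le_blNorm_mul_layerMajorant (one_le_two.trans hP) hβ.le hδ hf hz

theorem ofReal_integral_norm_le_blNorm (hP : 2 ≤ P) (hβ : 0 < β) (hδ : 0 < δ)
    (hf : blNorm P β δ 1 f ≠ ⊤) :
    ENNReal.ofReal (∫ z in Ici 0, ‖f z‖) ≤
      ENNReal.ofReal (β⁻¹ + ∫ u in Ioi (0 : ℝ), (1 + u ^ P)⁻¹) * blNorm P β δ 1 f := by
  have hmajorant : ∫ z in Ici 0, ‖f z‖ ≤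
      ∫ z in Ici 0, (blNorm P β δ 1 f).toReal * layerMajorant P β δ z := by
    refine integral_mono_of_nonneg (ae_of_all _ fun z ↦ norm_nonneg _)
      ((integrableOn_layerMajorant hP hβ hδ).const_mul _) ?_
    filter_upwards [ae_restrict_mem measurableSet_Ici] with z hz
    exact norm_le_blNorm_mul_layerMajorant (one_le_two.trans hP) hβ.le hδ hf hz
  rw [integral_const_mul, integral_layerMajorant hP hβ hδ] at hmajorant
  refine (ENNReal.ofReal_le_ofReal hmajorant).trans_eq ?_
  rw [ENNReal.ofReal_mul ENNReal.toReal_nonneg, ENNReal.ofReal_toReal hf, mul_comm]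

end BoundaryLayer

section GreenFunction

variable {a z w x : ℝ} {f : ℝ → ℂ}

/-- The kernel `e^{-a|x-z|} - e^{-a(x+z)}`: up to the factor `-1/(2a)`, the Green's function of
`∂² - a²` on the half line with Dirichlet condition at `0`. -/
noncomputable def greenKernel (a z x : ℝ) : ℝ :=
  Real.exp (-(a * |x - z|)) - Real.exp (-(a * (x + z)))

theorem greenSol_eq (a : ℝ) (f : ℝ → ℂ) (z : ℝ) :
    greenSol a f z = -(1 / (2 * (a : ℂ))) * ∫ x in Ici (0 : ℝ), (greenKernel a z x : ℂ) * f x :=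
  rfl

theorem continuous_greenKernel (a z : ℝ) : Continuous (greenKernel a z) := by
  unfold greenKernel
  fun_prop

theorem abs_greenKernel_le_one (ha : 0 ≤ a) (hz : 0 ≤ z) (hx : 0 ≤ x) :
    |greenKernel a z x| ≤ 1 :=
  abs_sub_le_of_nonneg_of_le (Real.exp_nonneg _)
    (Real.exp_le_one_iff.2 (neg_nonpos.2 (by positivity))) (Real.exp_nonneg _)
    (Real.exp_le_one_iff.2 (neg_nonpos.2 (by positivity)))

theorem abs_greenKernel_sub_le (ha : 0 ≤ a) (hz : 0 ≤ z) (hw : 0 ≤ w) (hx : 0 ≤ x) :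
    |greenKernel a z x - greenKernel a w x| ≤ 2 * a * |z - w| := by
  have hexp {s t : ℝ} (hs : 0 ≤ s) (ht : 0 ≤ t) (hst : |s - t| ≤ |z - w|) :
      |Real.exp (-(a * s)) - Real.exp (-(a * t))| ≤ a * |z - w| :=
    calc |Real.exp (-(a * s)) - Real.exp (-(a * t))|
        ≤ |a * s - a * t| := by
          simpa [Real.dist_eq] using lipschitzOnWith_exp_neg.dist_le_mul _
            (mul_nonneg ha hs) _ (mul_nonneg ha ht)
      _ = a * |s - t| := by rw [← mul_sub, abs_mul, abs_of_nonneg ha]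
      _ ≤ a * |z - w| := by gcongr
  have hdirect : abs (|x - z| - |x - w|) ≤ |z - w| := by
    simpa [abs_sub_comm] using abs_abs_sub_abs_le (x - z) (x - w)
  have himage : |x + z - (x + w)| ≤ |z - w| := by rw [add_sub_add_left_eq_sub]
  calc |greenKernel a z x - greenKernel a w x|
      = |(Real.exp (-(a * |x - z|)) - Real.exp (-(a * |x - w|))) -
          (Real.exp (-(a * (x + z))) - Real.exp (-(a * (x + w))))| := by
        rw [greenKernel, greenKernel, sub_sub_sub_comm]
    _ ≤ |Real.exp (-(a * |x - z|)) - Real.exp (-(a * |x - w|))| +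
          |Real.exp (-(a * (x + z))) - Real.exp (-(a * (x + w)))| := abs_sub _ _
    _ ≤ a * |z - w| + a * |z - w| :=
        add_le_add (hexp (abs_nonneg _) (abs_nonneg _) hdirect)
          (hexp (add_nonneg hx hz) (add_nonneg hx hw) himage)
    _ = 2 * a * |z - w| := by ring

theorem integrableOn_greenKernel_mul (ha : 0 ≤ a) (hz : 0 ≤ z) (hf : IntegrableOn f (Ici 0)) :
    IntegrableOn (fun x ↦ (greenKernel a z x : ℂ) * f x) (Ici 0) := by
  refine Integrable.bdd_mul (c := 1) hf
    (Complex.continuous_ofReal.comp (continuous_greenKernel a z)).aestronglyMeasurable ?_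
  filter_upwards [ae_restrict_mem measurableSet_Ici] with x hx
  rw [Complex.norm_real]
  exact abs_greenKernel_le_one ha hz hx

theorem norm_greenSol_prefactor (ha : 0 < a) : ‖-(1 / (2 * (a : ℂ)))‖ = 1 / (2 * a) := by
  simp [abs_of_pos ha]

theorem norm_greenSol_le (ha : 0 < a) (hz : 0 ≤ z) (hf : IntegrableOn f (Ici 0)) :
    ‖greenSol a f z‖ ≤ 1 / (2 * a) * ∫ x in Ici (0 : ℝ), ‖f x‖ := by
  rw [greenSol_eq, norm_mul, norm_greenSol_prefactor ha]
  gcongr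
  refine norm_integral_le_of_norm_le hf.norm ?_
  filter_upwards [ae_restrict_mem measurableSet_Ici] with x hx
  rw [norm_mul, Complex.norm_real]
  exact mul_le_of_le_one_left (norm_nonneg _) (abs_greenKernel_le_one ha.le hz hx)

theorem norm_greenSol_sub_le (ha : 0 < a) (hz : 0 ≤ z) (hw : 0 ≤ w)
    (hf : IntegrableOn f (Ici 0)) :
    ‖greenSol a f z - greenSol a f w‖ ≤ (∫ x in Ici (0 : ℝ), ‖f x‖) * |z - w| := by
  rw [greenSol_eq, greenSol_eq, ← mul_sub, norm_mul, norm_greenSol_prefactor ha,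
    ← integral_sub (integrableOn_greenKernel_mul ha.le hz hf)
      (integrableOn_greenKernel_mul ha.le hw hf)]
  have hintegral : ‖∫ x in Ici (0 : ℝ),
      ((greenKernel a z x : ℂ) * f x - (greenKernel a w x : ℂ) * f x)‖ ≤
      ∫ x in Ici (0 : ℝ), 2 * a * |z - w| * ‖f x‖ := by
    refine norm_integral_le_of_norm_le (hf.norm.const_mul _) ?_
    filter_upwards [ae_restrict_mem measurableSet_Ici] with x hx
    rw [← sub_mul, norm_mul, ← Complex.ofReal_sub, Complex.norm_real]
    exact mul_le_mul_of_nonneg_right (abs_greenKernel_sub_le ha.le hz hw hx) (norm_nonneg _)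
  rw [integral_const_mul] at hintegral
  refine (mul_le_mul_of_nonneg_left hintegral (by positivity)).trans_eq ?_
  field_simp

theorem norm_derivWithin_greenSol_le (ha : 0 < a) (hz : 0 ≤ z) (hf : IntegrableOn f (Ici 0)) :
    ‖derivWithin (greenSol a f) (Ici 0) z‖ ≤ ∫ x in Ici (0 : ℝ), ‖f x‖ := by
  refine norm_derivWithin_le_of_lip (integral_nonneg fun x ↦ norm_nonneg _) ?_
  filter_upwards [self_mem_nhdsWithin] with w hw
  exact norm_greenSol_sub_le ha hw hz hf

end GreenFunction

theorem stream_function_product_estimates_general (P : ℕ) (hP : 2 ≤ P) (β : ℝ) (hβ : 0 < β)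
    (a₀ : ℝ) (ha₀ : 0 < a₀) :
    ∃ C : ℝ, 0 < C ∧ ∀ α : ℝ, a₀ ≤ |α| → ∀ δ : ℝ, 0 < δ → ∀ f : ℝ → ℂ,
      AEStronglyMeasurable f (volume.restrict (Ici 0)) → blNorm P β δ 1 f < ⊤ →
      ∀ (p : ℕ) (g h : ℝ → ℂ),
        blNorm P β δ p (fun z ↦ derivWithin (greenSol |α| f) (Ici 0) z * g z) ≤
          ENNReal.ofReal C * blNorm P β δ 1 f * blNorm P β δ p g ∧
        blNorm P β δ p (fun z ↦ greenSol |α| f z * h z) ≤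
          ENNReal.ofReal C * blNorm P β δ 1 f * blNorm P β δ p h := by
  set K : ℝ := β⁻¹ + ∫ u in Ioi (0 : ℝ), (1 + u ^ P)⁻¹
  have hK : 0 < K := add_pos_of_pos_of_nonneg (inv_pos.2 hβ)
    (setIntegral_nonneg measurableSet_Ioi fun u (hu : 0 < u) ↦ by positivity)
  set A : ℝ := max 1 (1 / (2 * a₀))
  have hA : 0 < A := one_pos.trans_le (le_max_left _ _)
  refine ⟨A * K, mul_pos hA hK, fun α hα δ hδ f hfm hf p g h ↦ ?_⟩
  have hα₀ : 0 < |α| := ha₀.trans_le hα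
  have hfi : IntegrableOn f (Ici 0) := integrableOn_of_blNorm_ne_top hP hβ hδ hfm hf.ne
  have hL : 0 ≤ ∫ x in Ici (0 : ℝ), ‖f x‖ := integral_nonneg fun x ↦ norm_nonneg _
  have hmul (u k : ℝ → ℂ) (hu : ∀ z, 0 ≤ z → ‖u z‖ ≤ A * ∫ x in Ici (0 : ℝ), ‖f x‖) :
      blNorm P β δ p (fun z ↦ u z * k z) ≤
        ENNReal.ofReal (A * K) * blNorm P β δ 1 f * blNorm P β δ p k := by
    refine (blNorm_mul_le hδ (mul_nonneg hA.le hL) hu k).trans ?_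
    simp only [ENNReal.ofReal_mul hA.le, mul_assoc (ENNReal.ofReal A)]
    gcongr
    exact ofReal_integral_norm_le_blNorm hP hβ hδ hf.ne
  refine ⟨hmul _ g fun z hz ↦ ?_, hmul _ h fun z hz ↦ ?_⟩
  · exact (norm_derivWithin_greenSol_le hα₀ hz hfi).trans
      (le_mul_of_one_le_left hL (le_max_left _ _))
  · refine (norm_greenSol_le hα₀ hz hfi).trans (mul_le_mul_of_nonneg_right ?_ hL)
    exact (by gcongr : 1 / (2 * |α|) ≤ 1 / (2 * a₀)).trans (le_max_right _ _)

/-- product estimates for the stream function and its derivative against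
boundary-layer vorticities: `‖φ'g‖_{β,δ,1} ≤ C‖f‖_{β,δ,1}‖g‖_{β,δ,1}` and
`‖φh‖_{β,δ,1} ≤ C‖f‖_{β,δ,1}‖h‖_{β,δ,1}`, with `C = C(β,P)`. -/
theorem stream_function_product_estimates (P : ℕ) (hP : 2 ≤ P)
    (β : ℝ) (hβ0 : 0 < β) (hβ : β < 1/2) :
    ∃ C : ℝ, 0 < C ∧ ∀ α : ℝ, 1 ≤ |α| → ∀ δ ∈ Set.Ioc (0:ℝ) 1, ∀ f : ℝ → ℂ,
      ContinuousOn f (Set.Ici 0) → blNorm P β δ 1 f < ⊤ →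
      ∀ g h : ℝ → ℂ,
        blNorm P β δ 1
            (fun z => derivWithin (greenSol |α| f) (Set.Ici 0) z * g z) ≤
          ENNReal.ofReal C * blNorm P β δ 1 f * blNorm P β δ 1 g ∧
        blNorm P β δ 1 (fun z => greenSol |α| f z * h z) ≤
          ENNReal.ofReal C * blNorm P β δ 1 f * blNorm P β δ 1 h := by
  obtain ⟨C, hC, hprod⟩ := stream_function_product_estimates_general P hP β hβ0 1 one_pos
  exact ⟨C, hC, fun α hα δ hδ f hf hfin ↦
    hprod α hα δ hδ.1 f (hf.aestronglyMeasurable measurableSet_Ici) hfin 1⟩
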